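/- Let u be a subharmonic function on a domain in ℝ⁴ containing the closed unit ball, with u ≤ 0 there and u(0) > −∞, and let 1 ≤ p < 2. Then u ∈ L^p of the ball of radius 1/2 and ‖u‖_{L^p(B(0,1/2))} ≤ C_p |u(0)| for a constant C_p depending only on p. -/

import Mathlib

open Metric MeasureTheory

noncomputable section

abbrev E4 := EuclideanSpace ℝ (Fin 4)

/-- `u` is subharmonic on the open set `s ⊆ ℝ⁴`: it is upper semicontinuous and satisfies
the sub-mean value property over balls contained in `s`. -/
def SubharmonicOn (u : E4 → ℝ) (s : Set E4) : Prop :=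
  UpperSemicontinuousOn u s ∧ LocallyIntegrableOn u s ∧
    ∀ x ∈ s, ∀ r > (0 : ℝ), closedBall x r ⊆ s →
      u x ≤ ((volume (ball x r)).toReal)⁻¹ * ∫ y in ball x r, u y

/-- The Newton kernel of `ℝ⁴`, truncated at distance `δ`. -/
def truncNewton (δ : ℝ) (z : E4) : ℝ := (max ‖z‖ δ ^ 2)⁻¹

/-- A substitute for the Green function of the unit ball: off the diagonal it is strictly
subharmonic in `x`, and it is nonpositive for `‖x‖ = 1` and `‖y‖ ≤ 1 / 2`. -/
def greenMinorant (δ : ℝ) (x y : E4) : ℝ :=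
  truncNewton δ (x - y) - 3 - 32 / 9 * inner ℝ x y + 7 / 9 * ‖x‖ ^ 2

theorem truncNewton_le_inv_sq {δ : ℝ} {z : E4} (hz : 0 < ‖z‖) :
    truncNewton δ z ≤ (‖z‖ ^ 2)⁻¹ := by
  unfold truncNewton
  gcongr
  exact le_max_left _ _

theorem truncNewton_of_le {δ : ℝ} {z : E4} (hz : δ ≤ ‖z‖) :
    truncNewton δ z = (‖z‖ ^ 2)⁻¹ := by
  rw [truncNewton, max_eq_left hz]

theorem continuous_truncNewton {δ : ℝ} (hδ : 0 < δ) : Continuous (truncNewton δ) := by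
  unfold truncNewton
  refine Continuous.inv₀ (by fun_prop) fun z => ?_
  have : 0 < max ‖z‖ δ := lt_max_of_lt_right hδ
  positivity

theorem greenMinorant_nonpos {δ : ℝ} {x y : E4} (hx : ‖x‖ = 1) (hy : ‖y‖ ≤ 1 / 2) :
    greenMinorant δ x y ≤ 0 := by
  have hτ := abs_le.1 (abs_real_inner_le_norm x y)
  have hn := norm_sub_sq_real x y
  rw [hx] at hτ hn
  set τ := inner ℝ x y
  have hy0 := norm_nonneg y
  have h1 : (1 - τ) ^ 2 ≤ ‖x - y‖ ^ 2 := by nlinarith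
  have hpos : 0 < (1 - τ) ^ 2 := by
    have : 0 < 1 - τ := by linarith
    positivity
  have h0 : 0 < ‖x - y‖ := by
    have := norm_nonneg (x - y)
    rcases this.lt_or_eq with h | h
    · exact h
    · rw [← h] at h1; nlinarith
  have h2 : (‖x - y‖ ^ 2)⁻¹ ≤ ((1 - τ) ^ 2)⁻¹ := by gcongr
  have h3 : ((1 - τ) ^ 2)⁻¹ ≤ 20 / 9 + 32 / 9 * τ := by
    rw [inv_le_iff_one_le_mul₀ hpos]
    have : 0 ≤ (1 - 2 * τ) * (1 + 2 * τ) * (11 - 8 * τ) :=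
      mul_nonneg (mul_nonneg (by linarith) (by linarith)) (by linarith)
    nlinarith
  have h4 := truncNewton_le_inv_sq (δ := δ) h0
  unfold greenMinorant
  rw [hx]
  linarith

theorem greenMinorant_le_truncNewton {δ : ℝ} {x y : E4} (hx : ‖x‖ ≤ 1) (hy : ‖y‖ ≤ 1 / 2) :
    greenMinorant δ x y ≤ truncNewton δ (x - y) := by
  have hτ := abs_le.1 (abs_real_inner_le_norm x y)
  have : ‖x‖ * ‖y‖ ≤ 1 * (1 / 2) := by gcongr
  have : ‖x‖ ^ 2 ≤ 1 := pow_le_one₀ (norm_nonneg x) hx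
  unfold greenMinorant
  linarith

theorem one_le_greenMinorant_zero {δ : ℝ} (hδ : 0 < δ) (hδ' : δ ≤ 1 / 2) {y : E4}
    (hy : ‖y‖ ≤ 1 / 2) : 1 ≤ greenMinorant δ 0 y := by
  have h : (4 : ℝ) ≤ truncNewton δ (0 - y) := by
    have h0 : 0 < max ‖0 - y‖ δ := lt_max_of_lt_right hδ
    have h1 : max ‖0 - y‖ δ ≤ 1 / 2 := max_le (by simpa using hy) hδ'
    rw [truncNewton, le_inv_comm₀ (by norm_num) (by positivity)]
    nlinarith
  simp only [greenMinorant, inner_zero_left, norm_zero]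
  linarith

theorem continuous_greenMinorant {δ : ℝ} (hδ : 0 < δ) :
    Continuous fun q : E4 × E4 => greenMinorant δ q.1 q.2 := by
  have := continuous_truncNewton hδ
  unfold greenMinorant
  fun_prop

/-- Signed coordinate permutations representing multiplication by the quaternion units. -/
def quatRot : Fin 4 → E4 → E4 := fun k h =>
  match k with
  | 0 => h
  | 1 => !₂[-h 1, h 0, -h 3, h 2]
  | 2 => !₂[-h 2, h 3, h 0, -h 1]
  | 3 => !₂[-h 3, -h 2, h 1, h 0]

theorem norm_quatRot (k : Fin 4) (h : E4) : ‖quatRot k h‖ = ‖h‖ := by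
  rw [EuclideanSpace.norm_eq, EuclideanSpace.norm_eq]
  congr 1
  fin_cases k <;> simp [quatRot, Fin.sum_univ_four] <;> ring

theorem sum_inner_quatRot_sq (x h : E4) :
    ∑ k, (inner ℝ x (quatRot k h)) ^ 2 = ‖x‖ ^ 2 * ‖h‖ ^ 2 := by
  rw [EuclideanSpace.norm_sq_eq, EuclideanSpace.norm_sq_eq]
  simp [quatRot, Fin.sum_univ_four, PiLp.inner_apply]
  ring

/-- `quatRot k` as a linear isometry equivalence. -/
def quatRotEquiv (k : Fin 4) : E4 ≃ₗᵢ[ℝ] E4 :=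
  LinearIsometry.toLinearIsometryEquiv
    { toFun := quatRot k
      map_add' := fun x y => by
        fin_cases k <;> ext i <;> fin_cases i <;> simp [quatRot] <;> ring
      map_smul' := fun c x => by
        fin_cases k <;> ext i <;> fin_cases i <;> simp [quatRot]
      norm_map' := norm_quatRot k } rfl

theorem quatRotEquiv_apply (k : Fin 4) (h : E4) : quatRotEquiv k h = quatRot k h := rfl

theorem inv_add_inv_sub_ge {s b : ℝ} (hs : 0 < s) (hb : b ^ 2 < s ^ 2) :
    2 / s + 2 * b ^ 2 / s ^ 3 ≤ (s + b)⁻¹ + (s - b)⁻¹ := by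
  have hb' := abs_lt_of_sq_lt_sq hb hs.le
  rw [abs_lt] at hb'
  have h1 : 0 < s + b := by linarith
  have h2 : 0 < s - b := by linarith
  rw [← sub_nonneg]
  have : (s + b)⁻¹ + (s - b)⁻¹ - (2 / s + 2 * b ^ 2 / s ^ 3)
      = 2 * b ^ 4 / (s ^ 3 * ((s + b) * (s - b))) := by
    field_simp
    ring
  rw [this]
  positivity

theorem inv_add_div_cube_ge {a c : ℝ} (ha : 0 < a) (hc : 0 ≤ c) :
    1 / a - 2 * c ^ 2 / a ^ 3 ≤ 1 / (a + c) + a * c / (a + c) ^ 3 := by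
  have hs : 0 < a + c := by linarith
  have h1 : 1 / (a + c) + a * c / (a + c) ^ 3 - 1 / a =
      -(c ^ 2 * (2 * a + c) / (a * (a + c) ^ 3)) := by
    field_simp
    ring
  have h2 : c ^ 2 * (2 * a + c) / (a * (a + c) ^ 3) ≤ 2 * c ^ 2 / a ^ 3 := by
    rw [div_le_div_iff₀ (by positivity) (by positivity), ← sub_nonneg]
    have : 2 * c ^ 2 * (a * (a + c) ^ 3) - c ^ 2 * (2 * a + c) * a ^ 3
      = c ^ 2 * a * (5 * a ^ 2 * c + 6 * a * c ^ 2 + 2 * c ^ 3) := by ring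
    rw [this]
    positivity
  linarith

/-- Almost sub-mean value property of the Newton kernel over an orbit of the quaternion group. -/
theorem sum_inv_norm_sq_ge {z h : E4} (hzh : ‖h‖ < ‖z‖) :
    8 * ((‖z‖ ^ 2)⁻¹ - 2 * ‖h‖ ^ 4 / ‖z‖ ^ 6) ≤
      ∑ k, ((‖z + quatRot k h‖ ^ 2)⁻¹ + (‖z - quatRot k h‖ ^ 2)⁻¹) := by
  have hz : 0 < ‖z‖ := (norm_nonneg h).trans_lt hzh
  set s := ‖z‖ ^ 2 + ‖h‖ ^ 2 with hs
  have hs0 : 0 < s := by positivity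
  have hk : ∀ k, 2 / s + 2 * (2 * inner ℝ z (quatRot k h)) ^ 2 / s ^ 3 ≤
      (‖z + quatRot k h‖ ^ 2)⁻¹ + (‖z - quatRot k h‖ ^ 2)⁻¹ := by
    intro k
    have h1 : ‖z + quatRot k h‖ ^ 2 = s + 2 * inner ℝ z (quatRot k h) := by
      rw [norm_add_sq_real, norm_quatRot, hs]; ring
    have h2 : ‖z - quatRot k h‖ ^ 2 = s - 2 * inner ℝ z (quatRot k h) := by
      rw [norm_sub_sq_real, norm_quatRot, hs]; ring
    rw [h1, h2]
    refine inv_add_inv_sub_ge hs0 ?_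
    have h3 := abs_real_inner_le_norm z (quatRot k h)
    rw [norm_quatRot] at h3
    refine sq_lt_sq' ?_ ?_ <;> have := abs_le.1 h3 <;> nlinarith [sq_pos_of_pos (sub_pos.2 hzh)]
  refine le_trans ?_ (Finset.sum_le_sum fun k _ => hk k)
  have hsum : ∑ k, (2 / s + 2 * (2 * inner ℝ z (quatRot k h)) ^ 2 / s ^ 3) =
      8 * (1 / s + ‖z‖ ^ 2 * ‖h‖ ^ 2 / s ^ 3) := by
    rw [← sum_inner_quatRot_sq]
    simp only [Fin.sum_univ_four]
    ring
  rw [hsum]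
  have := inv_add_div_cube_ge (a := ‖z‖ ^ 2) (c := ‖h‖ ^ 2) (by positivity) (by positivity)
  have e : (‖z‖ ^ 2)⁻¹ - 2 * ‖h‖ ^ 4 / ‖z‖ ^ 6 =
    1 / ‖z‖ ^ 2 - 2 * (‖h‖ ^ 2) ^ 2 / (‖z‖ ^ 2) ^ 3 := by
    rw [← pow_mul, ← pow_mul, one_div]
  rw [e]
  linarith

theorem sum_greenMinorant_ge {δ : ℝ} (hδ : 0 < δ) {x y h : E4} (hxy : 2 * δ ≤ ‖x - y‖)
    (hh : ‖h‖ ≤ δ) (hh' : ‖h‖ ^ 2 ≤ δ ^ 6) :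
    8 * (greenMinorant δ x y + ‖h‖ ^ 2 / 2) ≤
      ∑ k, (greenMinorant δ (x + quatRot k h) y + greenMinorant δ (x - quatRot k h) y) := by
  have h1 := sum_inv_norm_sq_ge (z := x - y) (h := h) (by linarith)
  have hk : ∀ k, greenMinorant δ (x + quatRot k h) y + greenMinorant δ (x - quatRot k h) y =
      ((‖x - y + quatRot k h‖ ^ 2)⁻¹ + (‖x - y - quatRot k h‖ ^ 2)⁻¹) +
      (2 * (- 3 - 32 / 9 * inner ℝ x y + 7 / 9 * ‖x‖ ^ 2) + 14 / 9 * ‖h‖ ^ 2) := by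
    intro k
    have e1 : x + quatRot k h - y = x - y + quatRot k h := by abel
    have e2 : x - quatRot k h - y = x - y - quatRot k h := by abel
    have n1 : δ ≤ ‖x - y + quatRot k h‖ := by
      have := norm_sub_le_norm_add (x - y) (quatRot k h)
      rw [norm_quatRot] at this; linarith
    have n2 : δ ≤ ‖x - y - quatRot k h‖ := by
      have := norm_sub_norm_le (x - y) (quatRot k h)
      rw [norm_quatRot] at this; linarith
    simp only [greenMinorant, e1, e2, truncNewton_of_le n1, truncNewton_of_le n2,
      inner_add_left, inner_sub_left, norm_add_sq_real, norm_sub_sq_real x, norm_quatRot]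
    ring
  rw [Finset.sum_congr rfl fun k _ => hk k, Finset.sum_add_distrib]
  have h2 : 2 * ‖h‖ ^ 4 / ‖x - y‖ ^ 6 ≤ ‖h‖ ^ 2 / 32 := by
    have : (2 * δ) ^ 6 ≤ ‖x - y‖ ^ 6 := by gcongr
    have h3 : 0 < (2 * δ) ^ 6 := by positivity
    rw [div_le_iff₀ (by linarith)]
    have h4 : 64 * ‖h‖ ^ 2 ≤ ‖x - y‖ ^ 6 := by nlinarith
    nlinarith [mul_le_mul_of_nonneg_left h4 (sq_nonneg ‖h‖)]
  have h5 : greenMinorant δ x y =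
      (‖x - y‖ ^ 2)⁻¹ - 3 - 32 / 9 * inner ℝ x y + 7 / 9 * ‖x‖ ^ 2 := by
    rw [greenMinorant, truncNewton_of_le (by linarith)]
  rw [h5]
  simp only [Finset.sum_const, Finset.card_univ, Fintype.card_fin, nsmul_eq_mul]
  push_cast
  nlinarith [sq_nonneg ‖h‖]

theorem integrable_inv_norm_sq_indicator (R : ℝ) :
    Integrable (fun z : E4 => (Set.Iio R).indicator (fun t => (t ^ 2)⁻¹) ‖z‖) := by
  rw [integrable_fun_norm_addHaar volume (f := (Set.Iio R).indicator (fun t => (t ^ 2)⁻¹))]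
  have h : IntegrableOn (fun t : ℝ => t) (Set.Ioo 0 R) :=
    (continuous_id.integrableOn_Icc (a := 0) (b := R)).mono_set Set.Ioo_subset_Icc_self
  rw [← integrable_indicator_iff measurableSet_Ioo] at h
  refine IntegrableOn.congr_fun h.integrableOn (fun t (ht : 0 < t) => ?_) measurableSet_Ioi
  simp only [finrank_euclideanSpace, Fintype.card_fin, smul_eq_mul, Set.indicator_apply,
    Set.mem_Ioo, Set.mem_Iio, ht, true_and]
  split_ifs
  · norm_num
    field_simp
  · simp

theorem integral_inv_norm_sq_indicator {R : ℝ} (hR : 0 ≤ R) :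
    ∫ z : E4, (Set.Iio R).indicator (fun t => (t ^ 2)⁻¹) ‖z‖ =
      2 * volume.real (ball (0 : E4) 1) * R ^ 2 := by
  rw [integral_fun_norm_addHaar volume ((Set.Iio R).indicator (fun t => (t ^ 2)⁻¹))]
  have h : ∫ t in Set.Ioi (0 : ℝ), t ^ (Module.finrank ℝ E4 - 1) •
      (Set.Iio R).indicator (fun t => (t ^ 2)⁻¹) t = R ^ 2 / 2 := by
    have h1 : ∫ t in Set.Ioo 0 R, t = R ^ 2 / 2 := by
      rw [← integral_Ioc_eq_integral_Ioo, ← intervalIntegral.integral_of_le hR, integral_id]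
      ring
    rw [← h1, ← integral_indicator measurableSet_Ioi, ← integral_indicator measurableSet_Ioo]
    congr 1 with t
    simp only [finrank_euclideanSpace, Fintype.card_fin, smul_eq_mul, Set.indicator_apply,
      Set.mem_Ioo, Set.mem_Iio, Set.mem_Ioi]
    by_cases ht : 0 < t <;> by_cases ht' : t < R <;> simp [ht, ht']
    field_simp
  rw [h]
  simp only [finrank_euclideanSpace, Fintype.card_fin, smul_eq_mul, nsmul_eq_mul]
  push_cast
  ring

/-- Newton potentials of the indicator of a set of measure `m` are bounded by `C √m`. -/
theorem exists_setIntegral_truncNewton_le :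
    ∃ C : ℝ, 0 < C ∧ ∀ (K : Set E4), IsCompact K → ∀ δ > 0, ∀ x : E4,
      ∫ y in K, truncNewton δ (x - y) ≤ C * √(volume.real K) := by
  refine ⟨2 * volume.real (ball (0 : E4) 1) + 1, by positivity, fun K hK δ hδ x => ?_⟩
  rcases (measureReal_nonneg : 0 ≤ volume.real K).eq_or_lt with h0 | h0
  · have hK0 : volume K = 0 := by
      rwa [eq_comm, measureReal_eq_zero_iff hK.measure_lt_top.ne] at h0
    simp [Measure.restrict_eq_zero.2 hK0, ← h0]
  set m := volume.real K
  set R := √(√m)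
  have hR0 : 0 < R := by positivity
  have hR2 : R ^ 2 = √m := Real.sq_sqrt (by positivity)
  have hR4 : R ^ 2 * R ^ 2 = m := by rw [hR2, Real.mul_self_sqrt h0.le]
  set g : E4 → ℝ := fun z => (Set.Iio R).indicator (fun t => (t ^ 2)⁻¹) ‖z‖ with hg
  have hgi : Integrable fun y => g (x - y) :=
    (integrable_inv_norm_sq_indicator R).comp_sub_left x
  have hg0 : ∀ z, 0 ≤ g z := fun z => Set.indicator_nonneg (fun t _ => by positivity) _
  have hae : ∀ᵐ y : E4 ∂(volume.restrict K), truncNewton δ (x - y) ≤ g (x - y) + (R ^ 2)⁻¹ := by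
    refine ae_restrict_of_ae ?_
    have : ∀ᵐ y : E4, y ≠ x := by simp [ae_iff]
    filter_upwards [this] with y hy
    have hpos : 0 < ‖x - y‖ := norm_pos_iff.2 (sub_ne_zero.2 hy.symm)
    have h1 := truncNewton_le_inv_sq (δ := δ) hpos
    by_cases hlt : ‖x - y‖ < R
    · have : g (x - y) = (‖x - y‖ ^ 2)⁻¹ := by simp [hg, hlt]
      have : 0 < (R ^ 2)⁻¹ := by positivity
      linarith
    · have h2 : (‖x - y‖ ^ 2)⁻¹ ≤ (R ^ 2)⁻¹ := by
        gcongr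
        exact not_lt.1 hlt
      linarith [hg0 (x - y)]
  have hconst : IntegrableOn (fun _ : E4 => (R ^ 2)⁻¹) K := integrableOn_const hK.measure_lt_top.ne
  have hi : IntegrableOn (fun y => truncNewton δ (x - y)) K :=
    ((continuous_truncNewton hδ).comp
      (continuous_const.sub continuous_id)).continuousOn.integrableOn_compact hK
  calc ∫ y in K, truncNewton δ (x - y)
      ≤ ∫ y in K, (g (x - y) + (R ^ 2)⁻¹) :=
        integral_mono_ae hi (hgi.integrableOn.add hconst) hae
    _ = (∫ y in K, g (x - y)) + m * (R ^ 2)⁻¹ := by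
        rw [integral_add hgi.integrableOn hconst]; simp [m]
    _ ≤ (∫ y, g (x - y)) + m * (R ^ 2)⁻¹ := by
        gcongr ?_ + _
        exact setIntegral_le_integral hgi (ae_of_all _ fun y => hg0 _)
    _ = (2 * volume.real (ball (0 : E4) 1) + 1) * √m := by
        rw [integral_sub_left_eq_self g volume x, integral_inv_norm_sq_indicator hR0.le, ← hR2,
          ← hR4]
        have : R ^ 2 ≠ 0 := by positivity
        field_simp

/-- The potential of the kernel `greenMinorant δ` over the set `K`. -/
def greenPotential (δ : ℝ) (K : Set E4) (x : E4) : ℝ := ∫ y in K, greenMinorant δ x y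

theorem continuous_greenPotential {δ : ℝ} (hδ : 0 < δ) {K : Set E4} (hK : IsCompact K) :
    Continuous (greenPotential δ K) :=
  continuous_parametric_integral_of_continuous (continuous_greenMinorant hδ) hK

theorem integrableOn_greenMinorant {δ : ℝ} (hδ : 0 < δ) {K : Set E4} (hK : IsCompact K) (x : E4) :
    IntegrableOn (greenMinorant δ x) K :=
  ((continuous_greenMinorant hδ).comp (Continuous.prodMk_right x)).continuousOn.integrableOn_compact
    hK

theorem setIntegral_ball_eq_isometry (f : E4 → ℝ) (x : E4) (r : ℝ) (L : E4 ≃ₗᵢ[ℝ] E4) :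
    ∫ y in ball x r, f y = ∫ h in ball (0 : E4) r, f (x + L h) := by
  have h1 := (measurePreserving_add_left volume x).comp L.measurePreserving
  have h2 : MeasurableEmbedding ((x + ·) ∘ L : E4 → E4) :=
    (measurableEmbedding_addLeft x).comp L.toHomeomorph.measurableEmbedding
  rw [← h1.setIntegral_preimage_emb h2]
  congr 2
  ext h
  simp [dist_eq_norm]

theorem sum_setIntegral_quatRot {f : E4 → ℝ} (hf : Continuous f) (x : E4) (r : ℝ) :
    ∫ h in ball (0 : E4) r, ∑ k, (f (x + quatRot k h) + f (x - quatRot k h)) =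
      8 * ∫ y in ball x r, f y := by
  have hc : ∀ k, Continuous (quatRot k) := fun k => (quatRotEquiv k).continuous
  have hint : ∀ {g : E4 → ℝ}, Continuous g → IntegrableOn g (ball (0 : E4) r) := fun hg =>
    (hg.continuousOn.integrableOn_compact (isCompact_closedBall 0 r)).mono_set ball_subset_closedBall
  have h1 : ∀ k, IntegrableOn (fun h => f (x + quatRot k h)) (ball (0 : E4) r) := fun k =>
    hint (hf.comp (continuous_const.add (hc k)))
  have h2 : ∀ k, IntegrableOn (fun h => f (x - quatRot k h)) (ball (0 : E4) r) := fun k =>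
    hint (hf.comp (continuous_const.sub (hc k)))
  have e1 : ∀ k, ∫ h in ball (0 : E4) r, f (x + quatRot k h) = ∫ y in ball x r, f y := fun k =>
    (setIntegral_ball_eq_isometry f x r (quatRotEquiv k)).symm
  have e2 : ∀ k, ∫ h in ball (0 : E4) r, f (x - quatRot k h) = ∫ y in ball x r, f y := fun k => by
    rw [setIntegral_ball_eq_isometry f x r ((quatRotEquiv k).trans (LinearIsometryEquiv.neg ℝ))]
    simp [quatRotEquiv_apply, sub_eq_add_neg]
  rw [integral_finsetSum]
  · simp_rw [integral_add (h1 _) (h2 _), e1, e2]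
    simp
    ring
  · exact fun k _ => (h1 k).add (h2 k)

theorem greenPotential_lt_average {δ r : ℝ} (hδ : 0 < δ) (hr : 0 < r) (hrδ : r ≤ δ)
    (hrδ' : r ^ 2 ≤ δ ^ 6) {K : Set E4} (hK : IsCompact K) (hK0 : 0 < volume.real K) {x : E4}
    (hx : ∀ y ∈ K, 2 * δ ≤ ‖x - y‖) :
    volume.real (ball x r) * greenPotential δ K x < ∫ y in ball x r, greenPotential δ K y := by
  have hW := continuous_greenPotential hδ hK
  have hi := integrableOn_greenMinorant hδ hK
  have hpt : ∀ h ∈ ball (0 : E4) r, 8 * (greenPotential δ K x + volume.real K * (‖h‖ ^ 2 / 2)) ≤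
      ∑ k, (greenPotential δ K (x + quatRot k h) + greenPotential δ K (x - quatRot k h)) := by
    intro h hh
    rw [mem_ball_zero_iff] at hh
    have hconst : IntegrableOn (fun _ : E4 => ‖h‖ ^ 2 / 2) K :=
      integrableOn_const hK.measure_lt_top.ne
    have h1 : 8 * (greenPotential δ K x + volume.real K * (‖h‖ ^ 2 / 2)) =
        ∫ y in K, 8 * (greenMinorant δ x y + ‖h‖ ^ 2 / 2) := by
      rw [integral_const_mul, integral_add (hi x) hconst]
      simp [greenPotential]
    have h2 : ∑ k, (greenPotential δ K (x + quatRot k h) + greenPotential δ K (x - quatRot k h)) =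
        ∫ y in K, ∑ k, (greenMinorant δ (x + quatRot k h) y +
          greenMinorant δ (x - quatRot k h) y) := by
      rw [integral_finsetSum]
      · simp_rw [integral_add (hi _) (hi _)]
        rfl
      · exact fun k _ => (hi _).add (hi _)
    rw [h1, h2]
    refine setIntegral_mono_on (((hi x).add hconst).const_mul 8)
      (integrable_finsetSum _ fun k _ => (hi _).add (hi _)) hK.measurableSet fun y hy => ?_
    refine sum_greenMinorant_ge hδ (hx y hy) (hh.le.trans hrδ) (le_trans ?_ hrδ')
    gcongr
  have hint : ∀ {g : E4 → ℝ}, Continuous g → IntegrableOn g (ball (0 : E4) r) := fun hg =>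
    (hg.continuousOn.integrableOn_compact (isCompact_closedBall 0 r)).mono_set ball_subset_closedBall
  have hc : ∀ k, Continuous (quatRot k) := fun k => (quatRotEquiv k).continuous
  have hmono := setIntegral_mono_on (hint (by fun_prop)) (hint (by fun_prop)) measurableSet_ball hpt
  rw [sum_setIntegral_quatRot hW, integral_const_mul,
    integral_add (hint (by fun_prop)) (hint (by fun_prop)), integral_const_mul] at hmono
  have hpos : 0 < ∫ h in ball (0 : E4) r, ‖h‖ ^ 2 / 2 := by
    rw [setIntegral_pos_iff_support_of_nonneg_ae (ae_of_all _ fun h => by positivity)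
      (hint (by fun_prop))]
    have : (Function.support fun h : E4 => ‖h‖ ^ 2 / 2) = {0}ᶜ := by
      ext h; simp
    rw [this, Set.inter_comm, ← Set.sdiff_eq, measure_sdiff_null (measure_singleton 0)]
    exact measure_ball_pos _ _ hr
  have hvol : volume.real (ball x r) = volume.real (ball (0 : E4) r) := by
    simp only [measureReal_def, Measure.addHaar_ball_center]
  simp only [setIntegral_const, smul_eq_mul] at hmono
  rw [hvol]
  have := mul_pos hK0 hpos
  linarith

/-- Comparison of a nonpositive subharmonic function with a Green potential of a compact part of
its sublevel set `{u < -t}`. -/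
theorem SubharmonicOn.add_greenPotential_nonpos {s : Set E4} {u : E4 → ℝ}
    (hs : closedBall (0 : E4) 1 ⊆ s) (hu : SubharmonicOn u s) (hu0 : ∀ x ∈ s, u x ≤ 0)
    {δ c t : ℝ} (hδ : 0 < δ) (hc : 0 < c) {K : Set E4} (hK : IsCompact K)
    (hK0 : 0 < volume.real K) (hKb : K ⊆ ball 0 (1 / 2))
    (hKt : ∀ x ∈ closedBall (0 : E4) 1, ∀ y ∈ K, ‖x - y‖ < 2 * δ → u x < -t)
    (hct : ∀ x, c * ∫ y in K, truncNewton δ (x - y) ≤ t) {x : E4}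
    (hx : x ∈ closedBall (0 : E4) 1) : u x + c * greenPotential δ K x ≤ 0 := by
  obtain ⟨husc, hloc, hmean⟩ := hu
  have hW := continuous_greenPotential hδ hK
  have hi := integrableOn_greenMinorant hδ hK
  have hKn : ∀ y ∈ K, ‖y‖ ≤ 1 / 2 := fun y hy => (mem_ball_zero_iff.1 (hKb hy)).le
  have husc' : UpperSemicontinuousOn (fun z => u z + c * greenPotential δ K z)
      (closedBall (0 : E4) 1) :=
    UpperSemicontinuousOn.add (husc.mono hs)
      (ContinuousOn.upperSemicontinuousOn (by fun_prop))
  obtain ⟨x₀, hx₀, hmax⟩ := husc'.exists_isMaxOn ⟨x, hx⟩ (isCompact_closedBall 0 1)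
  refine (hmax hx).trans ?_
  by_contra! hpos
  have hx₀n : ‖x₀‖ ≤ 1 := mem_closedBall_zero_iff.1 hx₀
  have hx₀lt : ‖x₀‖ < 1 := by
    refine hx₀n.lt_of_ne fun h => ?_
    have h1 : greenPotential δ K x₀ ≤ 0 :=
      setIntegral_nonpos hK.measurableSet fun y hy => greenMinorant_nonpos h (hKn y hy)
    have := mul_nonneg hc.le (neg_nonneg.2 h1)
    linarith [hu0 x₀ (hs hx₀)]
  have hfar : ∀ y ∈ K, 2 * δ ≤ ‖x₀ - y‖ := by
    intro y hy
    by_contra! hlt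
    have h1 := hKt x₀ hx₀ y hy hlt
    have h2 : greenPotential δ K x₀ ≤ ∫ y in K, truncNewton δ (x₀ - y) := by
      refine setIntegral_mono_on (hi x₀) ?_ hK.measurableSet fun y hy =>
        greenMinorant_le_truncNewton hx₀n (hKn y hy)
      exact ((continuous_truncNewton hδ).comp
        (continuous_const.sub continuous_id)).continuousOn.integrableOn_compact hK
    have := mul_le_mul_of_nonneg_left h2 hc.le
    linarith [hct x₀]
  set r := min (min δ (δ ^ 3)) (1 - ‖x₀‖)
  have hr0 : 0 < r := lt_min (lt_min hδ (by positivity)) (by linarith)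
  have hrδ : r ≤ δ := (min_le_left _ _).trans (min_le_left _ _)
  have hrδ' : r ^ 2 ≤ δ ^ 6 := by
    have : r ≤ δ ^ 3 := (min_le_left _ _).trans (min_le_right _ _)
    calc r ^ 2 ≤ (δ ^ 3) ^ 2 := by gcongr
      _ = δ ^ 6 := by ring
  have hsub : closedBall x₀ r ⊆ closedBall 0 1 := by
    refine closedBall_subset_closedBall' ?_
    rw [dist_zero_right]
    have : r ≤ 1 - ‖x₀‖ := min_le_right _ _
    linarith
  have hlt := greenPotential_lt_average hδ hr0 hrδ hrδ' hK hK0 hfar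
  have hm := hmean x₀ (hs hx₀) r hr0 (hsub.trans hs)
  have hV : 0 < volume.real (ball x₀ r) :=
    ENNReal.toReal_pos (measure_ball_pos _ _ hr0).ne' measure_ball_lt_top.ne
  change u x₀ ≤ (volume.real (ball x₀ r))⁻¹ * _ at hm
  rw [inv_mul_eq_div, le_div_iff₀ hV] at hm
  have hui : IntegrableOn u (ball x₀ r) :=
    (hloc.integrableOn_compact_subset (hsub.trans hs) (isCompact_closedBall _ _)).mono_set
      ball_subset_closedBall
  have hWi : IntegrableOn (fun z => c * greenPotential δ K z) (ball x₀ r) :=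
    ((hW.const_mul c).continuousOn.integrableOn_compact (isCompact_closedBall x₀ r)).mono_set
      ball_subset_closedBall
  have hle : ∫ z in ball x₀ r, (u z + c * greenPotential δ K z) ≤
      ∫ z in ball x₀ r, (u x₀ + c * greenPotential δ K x₀) :=
    setIntegral_mono_on (hui.add hWi) (integrableOn_const measure_ball_lt_top.ne)
      measurableSet_ball fun z hz => hmax (hsub (ball_subset_closedBall hz))
  rw [integral_add hui hWi, integral_const_mul, setIntegral_const, smul_eq_mul] at hle
  nlinarith [mul_lt_mul_of_pos_left hlt hc]

/-- Weak `L²` estimate for nonpositive subharmonic functions on the unit ball of `ℝ⁴`. -/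
theorem exists_weak_type_bound :
    ∃ C : ℝ, 0 < C ∧ ∀ (s : Set E4) (u : E4 → ℝ), closedBall (0 : E4) 1 ⊆ s →
      SubharmonicOn u s → (∀ x ∈ s, u x ≤ 0) → ∀ t > 0,
        volume (ball (0 : E4) (1 / 2) ∩ {x | t < |u x|}) ≤ ENNReal.ofReal (C * (u 0 / t) ^ 2) := by
  obtain ⟨C, hC, hpot⟩ := exists_setIntegral_truncNewton_le
  refine ⟨C ^ 2, by positivity, fun s u hs hu hu0 t ht => ?_⟩
  obtain ⟨U, hU, hUs⟩ := upperSemicontinuousOn_iff_preimage_Iio.1 hu.1 (-t)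
  have hbs : ball (0 : E4) (1 / 2) ⊆ s :=
    (ball_subset_closedBall.trans (closedBall_subset_closedBall (by norm_num))).trans hs
  have hmem : ∀ x ∈ s, (x ∈ U ↔ u x < -t) := fun x hx => by
    have := Set.ext_iff.1 hUs x
    simpa [hx] using this.symm
  have hset : ball (0 : E4) (1 / 2) ∩ {x | t < |u x|} = ball 0 (1 / 2) ∩ U := by
    ext x
    simp only [Set.mem_inter_iff, Set.mem_ofPred_eq, and_congr_right_iff]
    intro hx
    rw [hmem x (hbs hx), abs_of_nonpos (hu0 x (hbs hx)), lt_neg]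
  rw [hset, (isOpen_ball.inter hU).measure_eq_iSup_isCompact]
  refine iSup_le fun K => iSup_le fun hKU => iSup_le fun hK => ?_
  rw [← ofReal_measureReal hK.measure_lt_top.ne]
  refine ENNReal.ofReal_le_ofReal ?_
  rcases (measureReal_nonneg : 0 ≤ volume.real K).eq_or_lt with h0 | h0
  · rw [← h0]; positivity
  obtain ⟨ε, hε, hthick⟩ := hK.exists_thickening_subset_open hU (hKU.trans Set.inter_subset_right)
  have hKb : K ⊆ ball 0 (1 / 2) := hKU.trans Set.inter_subset_left
  set δ := min (ε / 2) (1 / 2)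
  have hδ : 0 < δ := lt_min (by positivity) (by norm_num)
  have hδε : δ ≤ ε / 2 := min_le_left _ _
  set m := volume.real K
  have hm : 0 < √m := Real.sqrt_pos.2 h0
  have hc : 0 < t / (C * √m) := by positivity
  have key := hu.add_greenPotential_nonpos hs hu0 (t := t) hδ hc hK h0 hKb
    (fun x hx y hy hxy => (hmem x (hs hx)).1 (hthick (mem_thickening_iff.2
      ⟨y, hy, by rw [dist_eq_norm]; linarith⟩)))
    (fun x => by
      calc t / (C * √m) * ∫ y in K, truncNewton δ (x - y)
          ≤ t / (C * √m) * (C * √m) := by gcongr; exact hpot K hK δ hδ x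
        _ = t := by field_simp)
    (mem_closedBall_self zero_le_one)
  have hlow : m ≤ greenPotential δ K 0 := by
    have : ∫ _ in K, (1 : ℝ) ≤ greenPotential δ K 0 :=
      setIntegral_mono_on (integrableOn_const hK.measure_lt_top.ne)
        (integrableOn_greenMinorant hδ hK 0) hK.measurableSet fun y hy =>
          one_le_greenMinorant_zero hδ (min_le_right _ _) (mem_ball_zero_iff.1 (hKb hy)).le
    simpa [m] using this
  have h1 : t / (C * √m) * m ≤ -u 0 := by
    have := mul_le_mul_of_nonneg_left hlow hc.le
    linarith
  have h2 : √m ≤ C * (-u 0 / t) := by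
    have e : t / (C * √m) * m = t * √m / C := by
      nth_rewrite 2 [← Real.mul_self_sqrt h0.le]
      field_simp
    rw [e, div_le_iff₀ hC] at h1
    rw [← mul_div_assoc, le_div_iff₀ ht]
    linarith
  calc m = √m ^ 2 := (Real.sq_sqrt h0.le).symm
    _ ≤ (C * (-u 0 / t)) ^ 2 := by gcongr
    _ = C ^ 2 * (u 0 / t) ^ 2 := by ring

/-- A weak `L²` bound on a finite measure space gives strong `Lᵖ` bounds for `p < 2`. -/
theorem lintegral_rpow_le_of_weak_bound {α : Type*} [MeasurableSpace α] (μ : Measure α)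
    {f : α → ℝ} (hf : AEMeasurable f μ) (hf0 : 0 ≤ᵐ[μ] f) {p C V A : ℝ} (hp : 0 < p)
    (hp2 : p < 2) (hC : 0 ≤ C) (hV : 0 ≤ V) (hA : 0 < A) (hμ : μ Set.univ ≤ ENNReal.ofReal V)
    (hw : ∀ t > 0, μ {a | t < f a} ≤ ENNReal.ofReal (C * (A / t) ^ 2)) :
    ∫⁻ a, ENNReal.ofReal (f a ^ p) ∂μ ≤ ENNReal.ofReal ((V + p * C / (2 - p)) * A ^ p) := by
  rw [lintegral_rpow_eq_lintegral_meas_lt_mul μ hf0 hf hp, ← Set.Ioc_union_Ioi_eq_Ioi hA.le]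
  have hI1 : IntegrableOn (fun t : ℝ => t ^ (p - 1)) (Set.Ioc 0 A) := by
    rw [← intervalIntegrable_iff_integrableOn_Ioc_of_le hA.le]
    exact intervalIntegral.intervalIntegrable_rpow' (by linarith)
  have hI2 : IntegrableOn (fun t : ℝ => t ^ (p - 3)) (Set.Ioi A) :=
    integrableOn_Ioi_rpow_of_lt (by linarith) hA
  have e1 : ∫ t in Set.Ioc 0 A, t ^ (p - 1) = A ^ p / p := by
    rw [← intervalIntegral.integral_of_le hA.le, integral_rpow (Or.inl (by linarith))]
    simp [Real.zero_rpow hp.ne']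
  have e2 : ∫ t in Set.Ioi A, t ^ (p - 3) = A ^ (p - 2) / (2 - p) := by
    rw [integral_Ioi_rpow_of_lt (by linarith) hA, show p - 3 + 1 = p - 2 by ring,
      ← neg_div_neg_eq, neg_neg, neg_sub]
  have b1 : ∫⁻ t in Set.Ioc 0 A, μ {a | t < f a} * ENNReal.ofReal (t ^ (p - 1)) ≤
      ENNReal.ofReal (V * (A ^ p / p)) := by
    rw [← e1, ← integral_const_mul, ofReal_integral_eq_lintegral_ofReal (hI1.const_mul V)]
    · refine setLIntegral_mono' measurableSet_Ioc fun t ht => ?_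
      rw [ENNReal.ofReal_mul hV]
      gcongr
      exact (measure_mono (Set.subset_univ _)).trans hμ
    · refine (ae_restrict_iff' measurableSet_Ioc).2 (ae_of_all _ fun t ht => ?_)
      exact mul_nonneg hV (Real.rpow_nonneg ht.1.le _)
  have b2 : ∫⁻ t in Set.Ioi A, μ {a | t < f a} * ENNReal.ofReal (t ^ (p - 1)) ≤
      ENNReal.ofReal (C * A ^ 2 * (A ^ (p - 2) / (2 - p))) := by
    rw [← e2, ← integral_const_mul, ofReal_integral_eq_lintegral_ofReal (hI2.const_mul _)]
    · refine setLIntegral_mono' measurableSet_Ioi fun t (ht : A < t) => ?_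
      have ht0 : 0 < t := hA.trans ht
      calc μ {a | t < f a} * ENNReal.ofReal (t ^ (p - 1))
          ≤ ENNReal.ofReal (C * (A / t) ^ 2) * ENNReal.ofReal (t ^ (p - 1)) := by
            gcongr; exact hw t ht0
        _ = ENNReal.ofReal (C * A ^ 2 * t ^ (p - 3)) := by
            rw [← ENNReal.ofReal_mul (by positivity)]
            congr 1
            rw [show p - 3 = p - 1 - 2 by ring, Real.rpow_sub ht0 (p - 1), Real.rpow_two]
            ring
    · refine (ae_restrict_iff' measurableSet_Ioi).2 (ae_of_all _ fun t (ht : A < t) => ?_)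
      exact mul_nonneg (by positivity) (Real.rpow_nonneg (hA.trans ht).le _)
  have hp2' : 0 < 2 - p := by linarith
  calc ENNReal.ofReal p * ∫⁻ t in Set.Ioc 0 A ∪ Set.Ioi A,
        μ {a | t < f a} * ENNReal.ofReal (t ^ (p - 1))
      ≤ ENNReal.ofReal p * (ENNReal.ofReal (V * (A ^ p / p)) +
          ENNReal.ofReal (C * A ^ 2 * (A ^ (p - 2) / (2 - p)))) := by
        gcongr
        exact (lintegral_union_le _ _ _).trans (add_le_add b1 b2)
    _ = ENNReal.ofReal ((V + p * C / (2 - p)) * A ^ p) := by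
        rw [← ENNReal.ofReal_add (by positivity) (by positivity), ← ENNReal.ofReal_mul hp.le]
        congr 1
        rw [Real.rpow_sub hA, Real.rpow_two]
        field_simp

theorem stmt_11 (p : ℝ) (hp1 : 1 ≤ p) (hp2 : p < 2) :
    ∃ C : ℝ, 0 < C ∧ ∀ (s : Set E4) (u : E4 → ℝ),
      IsOpen s → closedBall (0 : E4) 1 ⊆ s →
      SubharmonicOn u s → (∀ x ∈ s, u x ≤ 0) →
      IntegrableOn (fun q => |u q| ^ p) (ball (0 : E4) (1 / 2)) volume ∧
        (∫ q in ball (0 : E4) (1 / 2), |u q| ^ p) ^ (1 / p) ≤ C * |u 0| := by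
  obtain ⟨C, hC, hweak⟩ := exists_weak_type_bound
  have hp0 : 0 < p := by linarith
  have hp2' : 0 < 2 - p := by linarith
  set V := volume.real (ball (0 : E4) (1 / 2))
  have hV : 0 < V :=
    ENNReal.toReal_pos (measure_ball_pos _ _ (by norm_num)).ne' measure_ball_lt_top.ne
  set D := V + p * C / (2 - p)
  have hD : 0 < D := by positivity
  refine ⟨D ^ (1 / p), by positivity, fun s u _ hs hu hu0 => ?_⟩
  have hbs : closedBall (0 : E4) (1 / 2) ⊆ s :=
    (closedBall_subset_closedBall (by norm_num)).trans hs
  have hui : IntegrableOn u (ball (0 : E4) (1 / 2)) :=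
    (hu.2.1.integrableOn_compact_subset hbs (isCompact_closedBall _ _)).mono_set
      ball_subset_closedBall
  have hmeas : AEMeasurable (fun q => |u q|) (volume.restrict (ball (0 : E4) (1 / 2))) :=
    hui.aestronglyMeasurable.aemeasurable.abs
  have hbound : ∀ A > |u 0|, ∫⁻ q in ball (0 : E4) (1 / 2), ENNReal.ofReal (|u q| ^ p) ≤
      ENNReal.ofReal (D * A ^ p) := by
    intro A hA
    refine lintegral_rpow_le_of_weak_bound _ hmeas (ae_of_all _ fun q => abs_nonneg _) hp0 hp2
      hC.le hV.le ((abs_nonneg _).trans_lt hA) ?_ fun t ht => ?_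
    · rw [Measure.restrict_apply_univ, ofReal_measureReal measure_ball_lt_top.ne]
    · rw [Measure.restrict_apply' measurableSet_ball, Set.inter_comm]
      refine (hweak s u hs hu hu0 t ht).trans (ENNReal.ofReal_le_ofReal ?_)
      rw [div_pow, div_pow, ← sq_abs (u 0)]
      gcongr
  have hlim : ∫⁻ q in ball (0 : E4) (1 / 2), ENNReal.ofReal (|u q| ^ p) ≤
      ENNReal.ofReal (D * |u 0| ^ p) := by
    have hcont : Continuous fun A : ℝ => ENNReal.ofReal (D * A ^ p) :=
      ENNReal.continuous_ofReal.comp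
        ((Real.continuous_rpow_const hp0.le).const_mul D)
    refine ge_of_tendsto (hcont.continuousWithinAt (s := Set.Ioi |u 0|)).tendsto ?_
    filter_upwards [self_mem_nhdsWithin] with A hA using hbound A hA
  have hnn : 0 ≤ᵐ[volume.restrict (ball (0 : E4) (1 / 2))] fun q => |u q| ^ p :=
    ae_of_all _ fun q => by positivity
  have hsm : AEStronglyMeasurable (fun q => |u q| ^ p) (volume.restrict (ball (0 : E4) (1 / 2))) :=
    (hmeas.pow_const p).aestronglyMeasurable
  refine ⟨⟨hsm, ?_⟩, ?_⟩
  · rw [hasFiniteIntegral_iff_ofReal hnn]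
    exact hlim.trans_lt ENNReal.ofReal_lt_top
  · have h1 : ∫ q in ball (0 : E4) (1 / 2), |u q| ^ p ≤ D * |u 0| ^ p := by
      rw [integral_eq_lintegral_of_nonneg_ae hnn hsm]
      exact ENNReal.toReal_le_of_le_ofReal (by positivity) hlim
    calc (∫ q in ball (0 : E4) (1 / 2), |u q| ^ p) ^ (1 / p)
        ≤ (D * |u 0| ^ p) ^ (1 / p) := by
          gcongr
      _ = D ^ (1 / p) * |u 0| := by
          rw [Real.mul_rpow hD.le (by positivity), ← Real.rpow_mul (abs_nonneg _),
            mul_one_div_cancel hp0.ne', Real.rpow_one]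

end
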